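/- Let K be a separably closed field and let E be a finite Galois extension of the field K((z)) of formal Laurent series over K, of degree m, where m is invertible in K. Then the Galois group Gal(E/K((z))) is cyclic of order m. -/

import Mathlib

/-!
`K((z))` is the fraction field of the henselian discrete valuation ring `A = K⟦z⟧`. Let `B` be the
integral closure of `A` in `E` and let `G` be the Galois group. By Hensel's lemma `B` is local: an
element of `B` separating a maximal ideal from its conjugates would descend to `A`. As the residue
field of `A` is separably closed, that of `B` is purely inseparable over it, so `G` acts trivially
on it and is its own inertia group. If `p` generates the maximal ideal of `B`, then
`σ ↦ σ(p)/p mod p` is a character of `G` with values in the residue field. An element `σ` of its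
kernel acts trivially on the graded ring of the `p`-adic filtration. Given `σ • x ≡ x mod p ^ i`,
the sum of `σ ^ k • (σ • x - x)` over `k < m` vanishes by telescoping and is `m * (σ • x - x)`
modulo `p ^ (i + 1)`. As `m` is a unit, `σ • x = x` by Krull's intersection theorem. So `G` embeds
in the multiplicative group of a field and is cyclic.
-/

open IsLocalRing Polynomial
open scoped Pointwise PowerSeries

section AssociatedGraded

variable {B G : Type*} [CommRing B] [Group G] [MulSemiringAction G B] {I : Ideal B} {σ : G}

theorem smul_sub_mem_pow_succ (hσ : σ ∈ I.inertia G)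
    (hσI : ∀ y ∈ I, σ • y - y ∈ I ^ 2) {i : ℕ} {y : B} (hy : y ∈ I ^ i) :
    σ • y - y ∈ I ^ (i + 1) := by
  induction i generalizing y with
  | zero => simpa using hσ y
  | succ i ih =>
    rw [pow_succ'] at hy
    induction hy using Submodule.mul_induction_on' with
    | mem_mul_mem a ha b hb =>
      have hσa : σ • a ∈ I := by simpa using add_mem (hσ a) ha
      have leibniz : σ • (a * b) - a * b = σ • a * (σ • b - b) + (σ • a - a) * b := by
        rw [smul_mul']; ring
      rw [leibniz]
      refine add_mem ?_ ?_
      · rw [pow_succ']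
        exact Ideal.mul_mem_mul hσa (ih hb)
      · rw [show i + 1 + 1 = 2 + i by ring, pow_add]
        exact Ideal.mul_mem_mul (hσI a ha) hb
    | add a _ b _ ha hb =>
      rw [smul_add, add_sub_add_comm]
      exact add_mem ha hb

theorem smul_sub_mem_pow_of_pow_eq_one {n : ℕ} (hn : IsUnit (n : B)) (hσn : σ ^ n = 1)
    (hσ : ∀ (i : ℕ), ∀ y ∈ I ^ i, σ • y - y ∈ I ^ (i + 1)) (i : ℕ) (x : B) :
    σ • x - x ∈ I ^ i := by
  induction i with
  | zero => simp
  | succ i ih =>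
    set y := σ • x - x
    have pow_smul_sub_mem (k : ℕ) : σ ^ k • y - y ∈ I ^ (i + 1) := by
      induction k with
      | zero => simp
      | succ k ihk =>
        have hk : σ ^ k • y ∈ I ^ i := by
          simpa using add_mem (Ideal.pow_le_pow_right i.le_succ ihk) ih
        simpa [pow_succ', mul_smul] using add_mem (hσ i _ hk) ihk
    have telescope : ∑ k ∈ Finset.range n, σ ^ k • y = 0 := by
      simp only [y, smul_sub, ← mul_smul, ← pow_succ]
      rw [Finset.sum_range_sub (fun k ↦ σ ^ k • x), hσn, pow_zero, sub_self]
    have hny : (n : B) * y ∈ I ^ (i + 1) := by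
      have := neg_mem (sum_mem fun k (_ : k ∈ Finset.range n) ↦ pow_smul_sub_mem k)
      simpa [Finset.sum_sub_distrib, telescope] using this
    exact (Ideal.unit_mul_mem_iff_mem _ hn).mp hny

end AssociatedGraded

section TameCharacter

variable {B G : Type*} [CommRing B] [Group G] [MulSemiringAction G B] {p : B}

theorem dvd_smul_of_mem_inertia_span_singleton {σ : G} (hσ : σ ∈ (Ideal.span {p}).inertia G) :
    p ∣ σ • p := by
  rw [← Ideal.mem_span_singleton]
  simpa using add_mem (hσ p) (Ideal.mem_span_singleton_self p)

/-- The factor `σ(p)/p ∈ B` by which an element of the inertia group of `(p)` multiplies `p`. -/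
noncomputable def inertiaMultiplier (σ : (Ideal.span {p}).inertia G) : B :=
  (dvd_smul_of_mem_inertia_span_singleton σ.2).choose

theorem mul_inertiaMultiplier (σ : (Ideal.span {p}).inertia G) :
    p * inertiaMultiplier σ = (σ : G) • p :=
  (dvd_smul_of_mem_inertia_span_singleton σ.2).choose_spec.symm

variable [IsDomain B]

theorem inertiaMultiplier_one (hp : p ≠ 0) :
    inertiaMultiplier (1 : (Ideal.span {p}).inertia G) = 1 := by
  apply mul_left_cancel₀ hp
  rw [mul_inertiaMultiplier, OneMemClass.coe_one, one_smul, mul_one]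

theorem inertiaMultiplier_mul (hp : p ≠ 0) (σ τ : (Ideal.span {p}).inertia G) :
    inertiaMultiplier (σ * τ) = inertiaMultiplier σ * (σ : G) • inertiaMultiplier τ := by
  apply mul_left_cancel₀ hp
  rw [mul_inertiaMultiplier, ← mul_assoc, mul_inertiaMultiplier, ← smul_mul',
    mul_inertiaMultiplier, Subgroup.coe_mul, mul_smul]

variable (G) in
/-- The tame character `σ ↦ σ(p)/p mod p` of the inertia group of a nonzero principal ideal
`(p)`. It describes the action of the inertia group on `(p)/(p²)`. -/
noncomputable def tameCharacter (hp : p ≠ 0) :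
    (Ideal.span {p}).inertia G →* B ⧸ Ideal.span {p} where
  toFun σ := Ideal.Quotient.mk _ (inertiaMultiplier σ)
  map_one' := by rw [inertiaMultiplier_one hp, map_one]
  map_mul' σ τ := by
    rw [inertiaMultiplier_mul hp, map_mul, Ideal.Quotient.mk_eq_mk_iff_sub_mem _ _ |>.mpr (σ.2 _)]

theorem smul_sub_mem_sq_of_tameCharacter_eq_one (hp : p ≠ 0) {σ : (Ideal.span {p}).inertia G}
    (hσ : tameCharacter G hp σ = 1) {y : B} (hy : y ∈ Ideal.span {p}) :
    (σ : G) • y - y ∈ Ideal.span {p} ^ 2 := by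
  obtain ⟨b, rfl⟩ := Ideal.mem_span_singleton.mp hy
  have factored : (σ : G) • (p * b) - p * b =
      p * (inertiaMultiplier σ * ((σ : G) • b - b) + (inertiaMultiplier σ - 1) * b) := by
    rw [smul_mul', ← mul_inertiaMultiplier]; ring
  have multiplier_sub_one_mem : inertiaMultiplier σ - 1 ∈ Ideal.span {p} :=
    Ideal.Quotient.eq.mp hσ
  rw [factored, sq]
  exact Ideal.mul_mem_mul (Ideal.mem_span_singleton_self p)
    (add_mem (Ideal.mul_mem_left _ _ (σ.2 b)) (Ideal.mul_mem_right _ _ multiplier_sub_one_mem))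

theorem tameCharacter_injective [IsNoetherianRing B] [FaithfulSMul G B]
    (hp : p ≠ 0) (hpu : ¬ IsUnit p) (hcard : IsUnit (Nat.card G : B)) :
    Function.Injective (tameCharacter G hp) := by
  rw [injective_iff_map_eq_one]
  intro σ hσ
  have smul_sub_mem_pow (x : B) (i : ℕ) : (σ : G) • x - x ∈ Ideal.span {p} ^ i :=
    smul_sub_mem_pow_of_pow_eq_one hcard pow_card_eq_one' (fun _ _ ↦ smul_sub_mem_pow_succ σ.2
      fun _ ↦ smul_sub_mem_sq_of_tameCharacter_eq_one hp hσ) i x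
  have krull : ⨅ i : ℕ, Ideal.span {p} ^ i = ⊥ :=
    Ideal.iInf_pow_eq_bot_of_isDomain _ (mt Ideal.span_singleton_eq_top.mp hpu)
  refine Subtype.ext (FaithfulSMul.eq_of_smul_eq_smul fun x : B ↦ ?_)
  rw [OneMemClass.coe_one, one_smul, ← sub_eq_zero, ← Ideal.mem_bot, ← krull]
  exact Ideal.mem_iInf.mpr (smul_sub_mem_pow x)

theorem isCyclic_inertia_of_prime [IsNoetherianRing B] [Finite G] [FaithfulSMul G B]
    (hp : Prime p) (hcard : IsUnit (Nat.card G : B)) :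
    IsCyclic ((Ideal.span {p}).inertia G) := by
  have : (Ideal.span {p}).IsPrime := (Ideal.span_singleton_prime hp.ne_zero).mpr hp
  exact isCyclic_of_injective_ringHom _ (tameCharacter_injective hp.ne_zero hp.not_isUnit hcard)

end TameCharacter

theorem exists_sub_one_mem_and_smul_mem {B : Type*} (G : Type*) [CommRing B] [Group G]
    [Finite G] [MulSemiringAction G B] (P : Ideal B) [P.IsMaximal] :
    ∃ c : B, c - 1 ∈ P ∧ (∀ σ : G, σ • P = P → σ • c = c) ∧ ∀ σ : G, σ • P ≠ P → σ • c ∈ P := by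
  classical
  have := Fintype.ofFinite G
  let D := MulAction.stabilizer G P
  have coprime (σ : G) (hσ : σ • P ≠ P) : P ⊔ σ • P = ⊤ := by
    have : (σ • P).IsMaximal :=
      Ideal.map_isMaximal_of_equiv (MulSemiringAction.toRingEquiv G B σ)
    exact Ideal.IsMaximal.coprime_of_ne ‹_› this hσ.symm
  have sup_iInf : P ⊔ ⨅ σ ∈ ({σ | σ • P ≠ P} : Finset G), σ • P = ⊤ :=
    Ideal.sup_iInf_eq_top fun σ hσ ↦ coprime σ (Finset.mem_filter.mp hσ).2
  obtain ⟨a, ha, b, hb, hab⟩ := Submodule.mem_sup.mp (sup_iInf ▸ Submodule.mem_top (x := (1 : B)))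
  have hbP : b - 1 ∈ P := by simpa [← hab] using ha
  refine ⟨∏ τ : D, τ • b, ?_, fun σ hσ ↦ Finset.smul_prod_perm b (⟨σ, hσ⟩ : D), fun σ hσ ↦ ?_⟩
  · rw [← Ideal.Quotient.eq, map_prod, map_one]
    refine Finset.prod_eq_one fun τ _ ↦ ?_
    rw [← map_one (Ideal.Quotient.mk P), Ideal.Quotient.eq]
    have := Ideal.smul_mem_pointwise_smul (τ : G) _ _ hbP
    rwa [τ.2, smul_sub, smul_one] at this
  · have hσ_inv : σ⁻¹ • P ≠ P := fun h ↦ hσ (by rw [← h, smul_inv_smul, h])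
    have hσb : σ • b ∈ P := Ideal.mem_inv_pointwise_smul_iff.mp <|
      Ideal.mem_iInf.mp (Ideal.mem_iInf.mp hb σ⁻¹) (by simpa using hσ_inv)
    rw [Finset.smul_prod']
    exact Ideal.mem_of_dvd _ (Finset.dvd_prod_of_mem _ (Finset.mem_univ (1 : D)))
      (by simpa using hσb)

theorem exists_prodXSubSMul_eq_X_sub_C_mul {B G : Type*} [CommRing B] [Group G] [Fintype G]
    [MulSemiringAction G B] {P : Ideal B} {c : B} (hc : ∀ σ : G, σ • c ≠ c → σ • c ∈ P) :
    ∃ g : B[X], prodXSubSMul G B c = (X - C c) * g ∧ g.eval 1 - 1 ∈ P := by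
  classical
  let base : G ⧸ MulAction.stabilizer G c := (1 : G)
  refine ⟨∏ q ∈ Finset.univ.erase base, (X - C (MulAction.ofQuotientStabilizer G c q)), ?_, ?_⟩
  · rw [prodXSubSMul, ← Finset.mul_prod_erase _ _ (Finset.mem_univ base),
      MulAction.ofQuotientStabilizer_mk, one_smul]
  · rw [← Ideal.Quotient.eq, eval_prod, map_prod, map_one]
    refine Finset.prod_eq_one fun q hq ↦ ?_
    obtain ⟨σ, rfl⟩ := QuotientGroup.mk_surjective q
    have hσ : σ • c ≠ c := by
      intro h
      refine Finset.ne_of_mem_erase hq (QuotientGroup.eq.mpr ?_)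
      simpa [MulAction.mem_stabilizer_iff, inv_smul_eq_iff, eq_comm] using h
    simpa using Ideal.Quotient.eq_zero_iff_mem.mpr (hc σ hσ)

theorem exists_smul_eq_of_prodXSubSMul_isRoot {B G : Type*} [CommRing B] [IsDomain B] [Group G]
    [Fintype G] [MulSemiringAction G B] {b c : B} (h : (prodXSubSMul G B c).IsRoot b) :
    ∃ σ : G, σ • c = b := by
  rw [IsRoot.def, prodXSubSMul, eval_prod, Finset.prod_eq_zero_iff] at h
  obtain ⟨q, -, hq⟩ := h
  obtain ⟨σ, rfl⟩ := QuotientGroup.mk_surjective q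
  exact ⟨σ, by simpa [sub_eq_zero, eq_comm] using hq⟩

theorem under_eq_maximalIdeal {A B : Type*} [CommRing A] [IsLocalRing A] [CommRing B]
    [Algebra A B] [Algebra.IsIntegral A B] (P : Ideal B) [P.IsMaximal] :
    P.under A = maximalIdeal A :=
  eq_maximalIdeal (Ideal.isMaximal_comap_of_isIntegral_of_isMaximal P)

-- Modulo `P`, the orbit polynomial of `c` is `(X - 1) * X ^ k`, so by Hensel's lemma it has a root
-- in `A`. That root is a conjugate of `c`, and hence equal to `c`.
theorem mem_range_algebraMap_of_smul_mem (A : Type*) {B : Type*} (G : Type*) [CommRing A]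
    [HenselianLocalRing A] [CommRing B] [IsDomain B] [Algebra A B] [Group G] [Finite G]
    [MulSemiringAction G B] [SMulCommClass G A B] [Algebra.IsInvariant A B G]
    {P : Ideal B} [hP : P.IsMaximal] {c : B} (hc1 : c - 1 ∈ P)
    (hc : ∀ σ : G, σ • c ≠ c → σ • c ∈ P) : c ∈ (algebraMap A B).range := by
  have := Fintype.ofFinite G
  have := Algebra.IsInvariant.isIntegral A B G
  obtain ⟨g, hg, hg1⟩ := exists_prodXSubSMul_eq_X_sub_C_mul hc
  obtain ⟨f, hfmap, -, hf⟩ := lifts_and_natDegree_eq_and_monic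
    ((lifts_iff_coeff_lifts (f := algebraMap A B) _).mpr fun n ↦
      Algebra.IsInvariant.isInvariant _ fun σ ↦ prodXSubSMul.coeff G B c σ n)
    (prodXSubSMul.monic G B c)
  have hc1' : 1 - c ∈ P := by simpa using neg_mem hc1
  have eval_one_mem : f.eval 1 ∈ maximalIdeal A := by
    rw [← under_eq_maximalIdeal P, Ideal.mem_comap, ← eval_map_apply, hfmap, hg, map_one]
    simpa using P.mul_mem_right (g.eval 1) hc1'
  have derivative_isUnit : IsUnit (f.derivative.eval 1) := by
    rw [← notMem_maximalIdeal, ← under_eq_maximalIdeal P, Ideal.mem_comap, ← eval_map_apply,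
      ← derivative_map, hfmap, hg, map_one]
    intro hmem
    have hg_mem : g.eval 1 ∈ P := by
      simpa [derivative_mul, P.mul_mem_right _ hc1', P.add_mem_iff_left] using hmem
    exact hP.ne_top (P.eq_top_iff_one.mpr (by simpa using sub_mem hg_mem hg1))
  obtain ⟨a, ha, -⟩ := HenselianLocalRing.is_henselian f hf 1 eval_one_mem
    (by simpa using derivative_isUnit)
  obtain ⟨σ, hσ⟩ := exists_smul_eq_of_prodXSubSMul_isRoot (hfmap ▸ ha.map)
  exact ⟨a, by rw [eq_inv_smul_iff.mpr hσ, smul_algebraMap]⟩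

theorem smul_ideal_eq_self_of_isMaximal (A : Type*) {B : Type*} {G : Type*} [CommRing A]
    [HenselianLocalRing A] [CommRing B] [IsDomain B] [Algebra A B] [Group G] [Finite G]
    [MulSemiringAction G B] [SMulCommClass G A B] [Algebra.IsInvariant A B G]
    (P : Ideal B) [hP : P.IsMaximal] (σ : G) : σ • P = P := by
  obtain ⟨c, hc1, hc_fixed, hc_mem⟩ := exists_sub_one_mem_and_smul_mem G P
  obtain ⟨a, rfl⟩ := mem_range_algebraMap_of_smul_mem A G hc1
    fun τ hτ ↦ hc_mem τ (mt (hc_fixed τ) hτ)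
  by_contra hσ
  have hcP := hc_mem σ hσ
  rw [smul_algebraMap] at hcP
  exact hP.ne_top (P.eq_top_iff_one.mpr (by simpa using sub_mem hcP hc1))

theorem isLocalRing_of_isInvariant (A B G : Type*) [CommRing A] [HenselianLocalRing A]
    [CommRing B] [IsDomain B] [Algebra A B] [Group G] [Finite G] [MulSemiringAction G B]
    [SMulCommClass G A B] [Algebra.IsInvariant A B G] : IsLocalRing B := by
  have := Algebra.IsInvariant.isIntegral A B G
  obtain ⟨P, hP⟩ := Ideal.exists_maximal B
  refine .of_unique_max_ideal ⟨P, hP, fun Q hQ ↦ ?_⟩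
  have under_eq : P.under A = Q.under A :=
    (under_eq_maximalIdeal P).trans (under_eq_maximalIdeal Q).symm
  obtain ⟨σ, rfl⟩ := Algebra.IsInvariant.exists_smul_of_under_eq A B G P Q under_eq
  exact smul_ideal_eq_self_of_isMaximal A P σ

theorem inertia_maximalIdeal_eq_top (A B G : Type*) [CommRing A] [IsLocalRing A]
    [IsSepClosed (ResidueField A)] [CommRing B] [IsLocalRing B] [Algebra A B]
    [IsLocalHom (algebraMap A B)] [Algebra.IsIntegral A B] [Group G] [MulSemiringAction G B]
    [SMulCommClass G A B] :
    (maximalIdeal B).inertia G = ⊤ := by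
  have : Algebra.IsIntegral A (ResidueField B) := .of_surjective
    (IsScalarTower.toAlgHom A B (ResidueField B)) residue_surjective
  have : Algebra.IsIntegral (ResidueField A) (ResidueField B) := .tower_top (R := A)
  refine eq_top_iff.mpr fun σ _ b ↦ Ideal.Quotient.eq.mp ?_
  have residue_action_eq_id := Subsingleton.elim
    (ResidueField.mapAlgEquiv' (MulSemiringAction.toAlgEquiv A B σ)).toAlgHom
    (AlgHom.id (ResidueField A) (ResidueField B))
  exact congr($residue_action_eq_id (residue B b))

theorem isCyclic_of_isGaloisGroup {A B G : Type*} [CommRing A] [HenselianLocalRing A]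
    [IsSepClosed (ResidueField A)] [CommRing B] [IsDedekindDomain B] [Algebra A B]
    [FaithfulSMul A B] [Group G] [Finite G] [MulSemiringAction G B] [IsGaloisGroup G A B]
    (hB : ¬ IsField B) (hcard : IsUnit (Nat.card G : A)) : IsCyclic G := by
  have := IsGaloisGroup.faithful (G := G) (B := B) A
  have := Algebra.IsInvariant.isIntegral A B G
  have := isLocalRing_of_isInvariant A B G
  obtain ⟨p, hp⟩ : ∃ p, maximalIdeal B = Ideal.span {p} :=
    (maximalIdeal_isPrincipal_of_isDedekindDomain B).principal
  have span_ne_bot : Ideal.span {p} ≠ ⊥ := hp ▸ isField_iff_maximalIdeal_eq.not.mp hB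
  have p_prime : Prime p :=
    (Ideal.span_singleton_prime (by simpa using span_ne_bot)).mp
      (hp ▸ (maximalIdeal.isMaximal B).isPrime)
  have cyclic_inertia : IsCyclic ((maximalIdeal B).inertia G) :=
    hp ▸ isCyclic_inertia_of_prime p_prime (by simpa using hcard.map (algebraMap A B))
  rw [inertia_maximalIdeal_eq_top A B G] at cyclic_inertia
  exact Subgroup.topEquiv.isCyclic.mp cyclic_inertia

theorem henselianLocalRing_of_isAdicComplete (A : Type*) [CommRing A] [IsLocalRing A]
    [IsAdicComplete (maximalIdeal A) A] : HenselianLocalRing A where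
  is_henselian f hf a ha hfa := HenselianRing.is_henselian f hf a ha (hfa.map _)

instance (K : Type*) [Field K] : HenselianLocalRing K⟦X⟧ :=
  have : IsAdicComplete (maximalIdeal K⟦X⟧) K⟦X⟧ := by
    rw [PowerSeries.maximalIdeal_eq_span_X]
    infer_instance
  henselianLocalRing_of_isAdicComplete _

theorem isSepClosed_of_ringEquiv {k k' : Type*} [Field k] [Field k'] [IsSepClosed k]
    (e : k ≃+* k') : IsSepClosed k' :=
  let := e.toRingHom.toAlgebra
  have : Algebra.IsAlgebraic k k' := ⟨e.surjective.forall.mpr isAlgebraic_algebraMap⟩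
  Algebra.IsAlgebraic.isSepClosed (F := k)

instance (K : Type*) [Field K] [IsSepClosed K] : IsSepClosed (ResidueField K⟦X⟧) :=
  isSepClosed_of_ringEquiv PowerSeries.residueFieldOfPowerSeries.symm

theorem stmt_15_general {A F E : Type*} [CommRing A] [IsDomain A] [IsDiscreteValuationRing A]
    [HenselianLocalRing A] [IsSepClosed (ResidueField A)] [Field F] [Algebra A F]
    [IsFractionRing A F] [Field E] [Algebra F E] [FiniteDimensional F E] [IsGalois F E]
    {m : ℕ} (hm : IsUnit (m : A)) (hdeg : Module.finrank F E = m) :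
    IsCyclic Gal(E/F) ∧ Nat.card Gal(E/F) = m := by
  let : Algebra A E := ((algebraMap F E).comp (algebraMap A F)).toAlgebra
  have : IsScalarTower A F E := .of_algebraMap_eq' rfl
  have : FaithfulSMul A E := .trans A F E
  have card_eq : Nat.card Gal(E/F) = m := (IsGalois.card_aut_eq_finrank F E).trans hdeg
  have : SMulCommClass Gal(E/F) A E := ⟨fun σ a x ↦ by
    simp only [← algebraMap_smul F a, smul_comm σ]⟩
  let B := integralClosure A E
  have : IsDedekindDomain B := integralClosure.isDedekindDomain A F E
  have : IsFractionRing B E := integralClosure.isFractionRing_of_finite_extension F E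
  have : IsGaloisGroup Gal(E/F) A B := .of_isFractionRing _ A B F E
  have hB : ¬ IsField B := fun h ↦
    IsDiscreteValuationRing.not_isField A (isField_of_isIntegral_of_isField
      (FaithfulSMul.algebraMap_injective A B) h)
  exact ⟨isCyclic_of_isGaloisGroup (A := A) hB (card_eq ▸ hm), card_eq⟩

theorem stmt_15 (K : Type*) [Field K] [IsSepClosed K]
    (E : Type*) [Field E] [Algebra (LaurentSeries K) E]
    [FiniteDimensional (LaurentSeries K) E] [IsGalois (LaurentSeries K) E]
    (m : ℕ) (hm : 0 < m) (hmu : IsUnit (m : K))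
    (hdeg : Module.finrank (LaurentSeries K) E = m) :
    IsCyclic (E ≃ₐ[LaurentSeries K] E) ∧ Nat.card (E ≃ₐ[LaurentSeries K] E) = m :=
  stmt_15_general (A := K⟦X⟧) (by simpa using hmu.map PowerSeries.C) hdeg
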